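/- Fix l ∈ {1,...,8}. Then: (1) for every w ∈ W(E8) and every C_l-frame A the image w(A) = {w(a) : a ∈ A} is again a C_l-frame, and W(E8) acts transitively on the set 𝒞_l of all C_l-frames; (2) every C_l-frame is contained in a unique C_8-frame; (3) the number of C_l-frames is |𝒞_l| = 135·binomial(8,l). -/

import Mathlib

noncomputable section

/-- `V = ℂ^8`. -/
abbrev V8 : Type := Fin 8 → ℂ

/-- The symmetric bilinear form `⟨x,y⟩ = ∑ᵢ xᵢ yᵢ` on `V`. -/
def ip (x y : V8) : ℂ := ∑ i, x i * y i

/-- `φ = (1/2, …, 1/2)`. -/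
def phi8 : V8 := fun _ => (1 : ℂ) / 2

/-- `x` has all coordinates in `ℤ`. -/
def IsIntVec (x : V8) : Prop := ∀ i, ∃ n : ℤ, x i = (n : ℂ)

/-- The `E₈` root lattice `P = {a ∈ ℤ⁸ ∪ (φ + ℤ⁸) : ⟨φ,a⟩ ∈ ℤ}`. -/
def E8lat : Set V8 :=
  {a | (IsIntVec a ∨ IsIntVec (a - phi8)) ∧ ∃ n : ℤ, ip phi8 a = (n : ℂ)}

/-- A `C_l`-frame relative to `P`: a set `A = {±a₀, …, ±a_{l-1}}` with
`⟨aᵢ,aⱼ⟩ = δᵢⱼ`, `aᵢ ± aⱼ ∈ P` for `i < j`, and `2aᵢ ∈ P`. -/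
def IsClFrame (l : ℕ) (A : Set V8) : Prop :=
  ∃ a : Fin l → V8,
    A = Set.range a ∪ Set.range (fun i => -a i) ∧
    (∀ i j, ip (a i) (a j) = if i = j then 1 else 0) ∧
    (∀ i j, i < j → a i + a j ∈ E8lat ∧ a i - a j ∈ E8lat) ∧
    (∀ i, (2 : ℂ) • a i ∈ E8lat)

/-- `w` is the reflection `r_α(v) = v − ⟨α,v⟩α` for some root `α ∈ Δ(E₈)`. -/
def IsE8Reflection (w : V8 ≃ₗ[ℂ] V8) : Prop :=
  ∃ α, α ∈ E8lat ∧ ip α α = 2 ∧ ∀ v, w v = v - ip α v • α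

/-- The Weyl group `W(E₈)`, generated by the reflections in roots of `Δ(E₈)`. -/
def WE8 : Subgroup (V8 ≃ₗ[ℂ] V8) := Subgroup.closure {w | IsE8Reflection w}

/-- integer coordinates of twice a lattice vector -/
def LL (z : Fin 8 → ℤ) : Prop := (∃ p : ℤ, ∃ u : Fin 8 → ℤ, ∀ i, z i = p + 2 * u i) ∧ 4 ∣ ∑ i, z i

def emb (z : Fin 8 → ℤ) : V8 := fun i => (z i : ℂ) / 2

lemma ip_add_left (x y z : V8) : ip (x + y) z = ip x z + ip y z := by
  simp [ip, add_mul, Finset.sum_add_distrib]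
lemma ip_add_right (x y z : V8) : ip x (y + z) = ip x y + ip x z := by
  simp [ip, mul_add, Finset.sum_add_distrib]
lemma ip_smul_left (c : ℂ) (x y : V8) : ip (c • x) y = c * ip x y := by
  simp [ip, Finset.mul_sum, mul_assoc]
lemma ip_smul_right (c : ℂ) (x y : V8) : ip x (c • y) = c * ip x y := by
  simp only [ip, Finset.mul_sum, Pi.smul_apply, smul_eq_mul]
  exact Finset.sum_congr rfl fun i _ => by ring
lemma ip_neg_left (x y : V8) : ip (-x) y = - ip x y := by simp [ip]
lemma ip_neg_right (x y : V8) : ip x (-y) = - ip x y := by simp [ip]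
lemma ip_sub_left (x y z : V8) : ip (x - y) z = ip x z - ip y z := by
  simp [ip, sub_mul, Finset.sum_sub_distrib]
lemma ip_sub_right (x y z : V8) : ip x (y - z) = ip x y - ip x z := by
  simp [ip, mul_sub, Finset.sum_sub_distrib]
lemma ip_comm (x y : V8) : ip x y = ip y x := by
  simp [ip, mul_comm]

lemma ip_emb (z w : Fin 8 → ℤ) : ip (emb z) (emb w) = ((∑ i, z i * w i : ℤ) : ℂ) / 4 := by
  simp only [ip, emb]
  push_cast
  rw [Finset.sum_div]
  exact Finset.sum_congr rfl fun i _ => by ring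

lemma ip_phi_emb (z : Fin 8 → ℤ) : ip phi8 (emb z) = ((∑ i, z i : ℤ) : ℂ) / 4 := by
  simp only [ip, emb, phi8]
  push_cast
  rw [Finset.sum_div]
  exact Finset.sum_congr rfl fun i _ => by ring

lemma emb_inj {z w : Fin 8 → ℤ} (h : emb z = emb w) : z = w := by
  funext i
  have := congrFun h i
  simp only [emb] at this
  have h2 : (z i : ℂ) = w i := by linear_combination 2 * this
  exact_mod_cast h2

lemma int_quarter (n : ℤ) : (∃ k : ℤ, ((n : ℤ) : ℂ) / 4 = (k : ℂ)) ↔ 4 ∣ n := by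
  constructor
  · rintro ⟨k, hk⟩
    refine ⟨k, ?_⟩
    have : (n : ℂ) = 4 * k := by linear_combination 4 * hk
    exact_mod_cast this
  · rintro ⟨k, rfl⟩
    exact ⟨k, by push_cast; ring⟩

lemma emb_mem_of {z : Fin 8 → ℤ} (h : LL z) : emb z ∈ E8lat := by
  obtain ⟨⟨p, u, hu⟩, h4⟩ := h
  refine ⟨?_, ?_⟩
  · rcases Int.even_or_odd' p with ⟨q, hq | hq⟩
    · left
      intro i
      refine ⟨q + u i, ?_⟩
      simp only [emb, hu, hq]; push_cast; ring
    · right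
      intro i
      refine ⟨q + u i, ?_⟩
      simp only [emb, hu, hq, phi8, Pi.sub_apply]; push_cast; ring
  · rw [ip_phi_emb]; exact (int_quarter _).2 h4

lemma mem_lat {x : V8} (h : x ∈ E8lat) : ∃ z, LL z ∧ x = emb z := by
  obtain ⟨h1, h2⟩ := h
  have : ∃ z : Fin 8 → ℤ, (∃ p : ℤ, ∃ u : Fin 8 → ℤ, ∀ i, z i = p + 2 * u i) ∧ x = emb z := by
    rcases h1 with h1 | h1
    · choose u hu using h1
      refine ⟨fun i => 0 + 2 * u i, ⟨0, u, fun i => rfl⟩, ?_⟩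
      funext i; simp [emb, hu]
    · choose u hu using h1
      refine ⟨fun i => 1 + 2 * u i, ⟨1, u, fun i => rfl⟩, ?_⟩
      funext i
      have := hu i
      simp only [Pi.sub_apply, phi8] at this
      simp only [emb]; push_cast; linear_combination this
  obtain ⟨z, hz, rfl⟩ := this
  refine ⟨z, ⟨hz, ?_⟩, rfl⟩
  rw [ip_phi_emb] at h2
  exact (int_quarter _).1 h2

lemma emb_mem {z : Fin 8 → ℤ} : emb z ∈ E8lat ↔ LL z := by
  refine ⟨fun h => ?_, emb_mem_of⟩
  obtain ⟨w, hw, h⟩ := mem_lat h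
  rwa [emb_inj h]

lemma lat_add {x y : V8} (hx : x ∈ E8lat) (hy : y ∈ E8lat) : x + y ∈ E8lat := by
  obtain ⟨z, ⟨⟨p, u, hz⟩, h4⟩, rfl⟩ := mem_lat hx
  obtain ⟨w, ⟨⟨q, v, hw⟩, h5⟩, rfl⟩ := mem_lat hy
  have : emb z + emb w = emb (z + w) := by
    funext i; simp only [emb, Pi.add_apply]; push_cast; ring
  rw [this]
  refine emb_mem_of ⟨⟨p + q, u + v, fun i => ?_⟩, ?_⟩
  · simp only [Pi.add_apply, hz, hw]; ring
  · simp only [Pi.add_apply, Finset.sum_add_distrib]; exact dvd_add h4 h5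

lemma lat_zsmul {x : V8} (n : ℤ) (hx : x ∈ E8lat) : (n : ℂ) • x ∈ E8lat := by
  obtain ⟨z, ⟨⟨p, u, hz⟩, h4⟩, rfl⟩ := mem_lat hx
  have : (n : ℂ) • emb z = emb (fun i => n * z i) := by
    funext i; simp only [emb, Pi.smul_apply, smul_eq_mul]; push_cast; ring
  rw [this]
  refine emb_mem_of ⟨⟨n * p, fun i => n * u i, fun i => ?_⟩, ?_⟩
  · simp only [hz]; ring
  · rw [← Finset.mul_sum]; exact dvd_mul_of_dvd_right h4 n

lemma lat_neg {x : V8} (hx : x ∈ E8lat) : -x ∈ E8lat := by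
  simpa using lat_zsmul (-1) hx

lemma lat_sub {x y : V8} (hx : x ∈ E8lat) (hy : y ∈ E8lat) : x - y ∈ E8lat := by
  rw [sub_eq_add_neg]; exact lat_add hx (lat_neg hy)

lemma lat_two {x : V8} (hx : x ∈ E8lat) : (2 : ℂ) • x ∈ E8lat := by
  simpa using lat_zsmul 2 hx

lemma lat_ip {x y : V8} (hx : x ∈ E8lat) (hy : y ∈ E8lat) : ∃ n : ℤ, ip x y = n := by
  obtain ⟨z, ⟨⟨p, u, hz⟩, h4⟩, rfl⟩ := mem_lat hx
  obtain ⟨w, ⟨⟨q, v, hw⟩, h5⟩, rfl⟩ := mem_lat hy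
  rw [ip_emb]
  refine (int_quarter _).2 ?_
  have e1 : ∑ i, z i * w i = q * ∑ i, z i + p * (2 * ∑ i, v i) + 4 * ∑ i, u i * v i := by
    simp only [Finset.mul_sum, ← Finset.sum_add_distrib]
    exact Finset.sum_congr rfl fun i _ => by rw [hw, hz]; ring
  have e2 : ∑ i, w i = 8 * q + 2 * ∑ i, v i := by
    simp only [hw, Finset.sum_add_distrib, ← Finset.mul_sum]; simp
  have e3 : (4 : ℤ) ∣ 2 * ∑ i, v i := by omega
  rw [e1]
  exact dvd_add (dvd_add (dvd_mul_of_dvd_right h4 _) (dvd_mul_of_dvd_right e3 _)) (dvd_mul_right _ _)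

/-- the reflection as a linear equivalence -/
def refl8 (α : V8) (h : ip α α = 2) : V8 ≃ₗ[ℂ] V8 :=
  LinearEquiv.ofInvolutive
    { toFun := fun v => v - ip α v • α
      map_add' := fun x y => by rw [ip_add_right, add_smul]; abel
      map_smul' := fun c x => by
        simp only [ip_smul_right, RingHom.id_apply, smul_sub, smul_smul] }
    (fun v => by
      change (v - ip α v • α) - ip α (v - ip α v • α) • α = v
      rw [ip_sub_right, ip_smul_right, h]
      module)

lemma refl8_apply (α : V8) (h : ip α α = 2) (v : V8) : refl8 α h v = v - ip α v • α := rfl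

lemma refl8_mem (α : V8) (h : ip α α = 2) (hα : α ∈ E8lat) : refl8 α h ∈ WE8 :=
  Subgroup.subset_closure ⟨α, hα, h, fun _ => rfl⟩

lemma W_pres {w : V8 ≃ₗ[ℂ] V8} (hw : w ∈ WE8) :
    (∀ x y, ip (w x) (w y) = ip x y) ∧ (∀ x, w x ∈ E8lat ↔ x ∈ E8lat) := by
  induction hw using Subgroup.closure_induction with
  | mem w hw =>
    obtain ⟨α, hα, h2, hw⟩ := hw
    have key : ∀ x ∈ E8lat, w x ∈ E8lat := fun x hx => by
      obtain ⟨n, hn⟩ := lat_ip hα hx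
      rw [hw, hn]
      exact lat_sub hx (lat_zsmul n hα)
    refine ⟨fun x y => ?_, fun x => ⟨fun h => ?_, key x⟩⟩
    · rw [hw, hw]
      simp only [ip_sub_left, ip_sub_right, ip_smul_left, ip_smul_right, h2, ip_comm x α]
      ring
    · have := key _ h
      rw [hw, hw, ip_sub_right, ip_smul_right, h2] at this
      convert this using 1
      module
  | one => exact ⟨fun _ _ => rfl, fun _ => Iff.rfl⟩
  | mul a b _ _ ha hb =>
    exact ⟨fun x y => (ha.1 _ _).trans (hb.1 _ _), fun x => (ha.2 _).trans (hb.2 _)⟩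
  | inv a _ ha =>
    have h : ∀ x, a (a⁻¹ x) = x := fun x => a.apply_symm_apply x
    exact ⟨fun x y => by rw [← ha.1, h, h], fun x => by rw [← ha.2, h]⟩

lemma frame_image {l : ℕ} {A : Set V8} {w : V8 ≃ₗ[ℂ] V8} (hw : w ∈ WE8) (hA : IsClFrame l A) :
    IsClFrame l (w '' A) := by
  obtain ⟨a, rfl, h1, h2, h3⟩ := hA
  obtain ⟨p1, p2⟩ := W_pres hw
  refine ⟨fun i => w (a i), ?_, fun i j => ?_, fun i j hij => ?_, fun i => ?_⟩
  · rw [Set.image_union, ← Set.range_comp, ← Set.range_comp]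
    congr 2
    funext i
    simp
  · rw [p1, h1]
  · rw [← map_add, ← map_sub, p2, p2]; exact h2 i j hij
  · rw [← map_smul, p2]; exact h3 i

/-- standard basis -/
def ee (i : Fin 8) : V8 := Pi.single i 1

lemma ip_ee_left (i : Fin 8) (v : V8) : ip (ee i) v = v i := by
  simp [ip, ee, Pi.single_apply]
lemma ip_ee_right (i : Fin 8) (v : V8) : ip v (ee i) = v i := by
  rw [ip_comm, ip_ee_left]
lemma ee_apply (i j : Fin 8) : ee i j = if j = i then 1 else 0 := by
  simp [ee, Pi.single_apply]
lemma ip_ee (i j : Fin 8) : ip (ee i) (ee j) = if i = j then 1 else 0 := by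
  rw [ip_ee_left, ee_apply]

lemma two_ee_eq (i : Fin 8) : (2 : ℂ) • ee i = emb (Pi.single i 4) := by
  funext j
  by_cases h : j = i
  · subst h; simp [ee, emb]; norm_num
  · simp [ee, emb, h]

lemma two_ee_mem (i : Fin 8) : (2 : ℂ) • ee i ∈ E8lat := by
  rw [two_ee_eq]
  refine emb_mem_of ⟨⟨0, Pi.single i 2, fun j => ?_⟩, ?_⟩
  · by_cases h : j = i
    · subst h; simp
    · simp [h]
  · simp

lemma ee_sub_mem (i j : Fin 8) : ee i - ee j ∈ E8lat := by
  have : ee i - ee j = emb (Pi.single i 2 - Pi.single j 2) := by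
    funext k
    simp only [ee, emb, Pi.sub_apply, Pi.single_apply]
    split_ifs <;> simp
  rw [this]
  refine emb_mem_of ⟨⟨0, Pi.single i 1 - Pi.single j 1, fun k => ?_⟩, ?_⟩
  · simp only [Pi.sub_apply, Pi.single_apply]
    split_ifs <;> simp
  · simp

lemma ee_add_mem (i j : Fin 8) : ee i + ee j ∈ E8lat := by
  have : ee i + ee j = (ee i - ee j) + (2 : ℂ) • ee j := by module
  rw [this]; exact lat_add (ee_sub_mem i j) (two_ee_mem j)

def stdF (J : Finset (Fin 8)) : Set V8 := {v | ∃ j ∈ J, v = ee j ∨ v = - ee j}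

lemma stdF_frame {l : ℕ} {J : Finset (Fin 8)} (hJ : J.card = l) : IsClFrame l (stdF J) := by
  refine ⟨fun i => ee (J.orderEmbOfFin hJ i), ?_, fun i j => ?_, fun i j _ => ?_, fun i => ?_⟩
  · ext v
    have hr : ∀ j, j ∈ J ↔ ∃ i, J.orderEmbOfFin hJ i = j := fun j => by
      have := Finset.range_orderEmbOfFin J hJ
      rw [Set.ext_iff] at this
      exact (this j).symm
    simp only [stdF, Set.mem_ofPred_eq, Set.mem_union, Set.mem_range, hr]
    constructor
    · rintro ⟨_, ⟨i, rfl⟩, h | h⟩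
      · exact Or.inl ⟨i, h.symm⟩
      · exact Or.inr ⟨i, h.symm⟩
    · rintro (⟨i, h⟩ | ⟨i, h⟩)
      · exact ⟨_, ⟨i, rfl⟩, Or.inl h.symm⟩
      · exact ⟨_, ⟨i, rfl⟩, Or.inr h.symm⟩
  · rw [ip_ee]; simp
  · exact ⟨ee_add_mem _ _, ee_sub_mem _ _⟩
  · exact two_ee_mem _

lemma ee_mem_stdF {J : Finset (Fin 8)} {j : Fin 8} : ee j ∈ stdF J ↔ j ∈ J := by
  constructor
  · rintro ⟨k, hk, h | h⟩
    · have := congrFun h j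
      rw [ee_apply, ee_apply] at this
      by_cases hjk : j = k
      · rwa [hjk]
      · simp [hjk] at this
    · have := congrFun h j
      rw [Pi.neg_apply, ee_apply, ee_apply] at this
      by_cases hjk : j = k
      · rwa [hjk]
      · simp [hjk] at this
  · exact fun h => ⟨j, h, Or.inl rfl⟩

lemma stdF_inj {J K : Finset (Fin 8)} (h : stdF J = stdF K) : J = K := by
  ext j; rw [← ee_mem_stdF, h, ee_mem_stdF]

lemma frame_neg {l : ℕ} {A : Set V8} (hA : IsClFrame l A) {v : V8} (hv : v ∈ A) : -v ∈ A := by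
  obtain ⟨a, rfl, -⟩ := hA
  rcases hv with ⟨i, rfl⟩ | ⟨i, rfl⟩
  · exact Or.inr ⟨i, rfl⟩
  · exact Or.inl ⟨i, by simp⟩

lemma frame_unit {l : ℕ} {A : Set V8} (hA : IsClFrame l A) {v : V8} (hv : v ∈ A) :
    ip v v = 1 ∧ (2 : ℂ) • v ∈ E8lat := by
  obtain ⟨a, rfl, h1, -, h3⟩ := hA
  rcases hv with ⟨i, rfl⟩ | ⟨i, rfl⟩
  · exact ⟨by simp [h1], h3 i⟩
  · refine ⟨by simp [h1, ip_neg_left, ip_neg_right], ?_⟩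
    simp only [smul_neg]; exact lat_neg (h3 i)

lemma frame_nonempty {l : ℕ} {A : Set V8} (hl : 1 ≤ l) (hA : IsClFrame l A) : A.Nonempty := by
  obtain ⟨a, rfl, -⟩ := hA
  exact ⟨a ⟨0, hl⟩, Or.inl ⟨_, rfl⟩⟩

/-- a norm one integer vector is plus or minus a basis vector -/
lemma int_unit (z : Fin 8 → ℤ) (h : ∑ i, z i * z i = 1) :
    ∃ j, (∀ i, i ≠ j → z i = 0) ∧ (z j = 1 ∨ z j = -1) := by
  have : ∃ j, z j ≠ 0 := by
    by_contra! hc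
    simp [hc] at h
  obtain ⟨j, hj⟩ := this
  have e := Finset.add_sum_erase Finset.univ (fun i => z i * z i) (Finset.mem_univ j)
  simp only [h] at e
  have hp : 0 < z j * z j := mul_self_pos.2 hj
  have hn : 0 ≤ ∑ i ∈ Finset.univ.erase j, z i * z i :=
    Finset.sum_nonneg fun i _ => mul_self_nonneg _
  have hz : ∑ i ∈ Finset.univ.erase j, z i * z i = 0 := by omega
  rw [Finset.sum_eq_zero_iff_of_nonneg (fun i _ => mul_self_nonneg _)] at hz
  refine ⟨j, fun i hi => mul_self_eq_zero.1 (hz i (by simp [hi])), ?_⟩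
  exact mul_self_eq_one_iff.1 (by omega)

lemma near_ee {k : Fin 8} {b : V8} (h1 : ip b b = 1) (h0 : ip (ee k) b = 0)
    (hp : ee k + b ∈ E8lat) : ∃ j, b = ee j ∨ b = - ee j := by
  have hint : ∀ i, ∃ n : ℤ, b i = n := by
    rw [ip_ee_left] at h0
    have hadd : IsIntVec (ee k + b) := by
      rcases hp.1 with h | h
      · exact h
      · obtain ⟨n, hn⟩ := h k
        simp only [Pi.sub_apply, Pi.add_apply, h0, ee_apply, phi8] at hn
        have : (1 : ℂ) = 2 * n := by
          simp only [if_true] at hn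
          linear_combination 2 * hn
        have h2 : (1 : ℤ) = 2 * n := by exact_mod_cast this
        omega
    intro i
    obtain ⟨n, hn⟩ := hadd i
    simp only [Pi.add_apply, ee_apply] at hn
    split_ifs at hn with hik
    · exact ⟨n - 1, by push_cast; linear_combination hn⟩
    · exact ⟨n, by linear_combination hn⟩
  choose z hz using hint
  have hs : ∑ i, z i * z i = 1 := by
    simp only [ip, hz] at h1
    exact_mod_cast h1
  obtain ⟨j, hj, hj2⟩ := int_unit z hs
  refine ⟨j, ?_⟩
  rcases hj2 with h | h
  · left
    funext i
    rw [hz, ee_apply]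
    split_ifs with hij
    · subst hij; simp [h]
    · simp [hj i hij]
  · right
    funext i
    rw [hz, Pi.neg_apply, ee_apply]
    split_ifs with hij
    · subst hij; simp [h]
    · simp [hj i hij]

lemma frame_std {l : ℕ} {A : Set V8} (hA : IsClFrame l A) {k : Fin 8} (hk : ee k ∈ A) :
    ∃ J : Finset (Fin 8), J.card = l ∧ A = stdF J := by
  obtain ⟨a, rfl, h1, h2, h3⟩ := hA
  have hi0 : ∃ i0, a i0 = ee k ∨ a i0 = - ee k := by
    rcases hk with ⟨i, h⟩ | ⟨i, h⟩
    · exact ⟨i, Or.inl h⟩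
    · exact ⟨i, Or.inr (by rw [← h]; simp)⟩
  obtain ⟨i0, hi0⟩ := hi0
  have pm : ∀ i j, i ≠ j → a i + a j ∈ E8lat ∧ a i - a j ∈ E8lat := fun i j hij => by
    rcases lt_or_gt_of_ne hij with h | h
    · exact h2 i j h
    · have := h2 j i h
      exact ⟨by rw [add_comm]; exact this.1, by rw [← neg_sub]; exact lat_neg this.2⟩
  have all : ∀ i, ∃ j, a i = ee j ∨ a i = - ee j := fun i => by
    by_cases hi : i = i0
    · subst hi; exact ⟨k, hi0⟩
    · have ho : ip (ee k) (a i) = 0 := by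
        have := h1 i0 i
        rw [if_neg (Ne.symm hi)] at this
        rcases hi0 with h | h
        · rwa [← h]
        · rw [h, ip_neg_left] at this; exact neg_eq_zero.1 this
      have hp : ee k + a i ∈ E8lat := by
        have := pm i i0 hi
        rcases hi0 with h | h
        · rw [← h, add_comm]; exact this.1
        · have h' : ee k = - a i0 := by rw [h]; simp
          rw [h', neg_add_eq_sub]; exact this.2
      exact near_ee (by simp [h1]) ho hp
  choose j hj using all
  have jinj : Function.Injective j := fun i i' h => by
    by_contra hne
    have h0 := h1 i i'
    rw [if_neg hne] at h0
    have hi := hj i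
    have hi' := hj i'
    rw [h] at hi
    rcases hi with hi | hi <;> rcases hi' with hi' | hi' <;>
      simp [hi, hi', ip_neg_left, ip_neg_right, ip_ee] at h0
  refine ⟨Finset.univ.image j, by rw [Finset.card_image_of_injective _ jinj]; simp, ?_⟩
  ext v
  simp only [Set.mem_union, Set.mem_range, stdF, Set.mem_ofPred_eq, Finset.mem_image,
    Finset.mem_univ, true_and]
  constructor
  · rintro (⟨i, rfl⟩ | ⟨i, rfl⟩)
    · exact ⟨_, ⟨i, rfl⟩, hj i⟩
    · refine ⟨_, ⟨i, rfl⟩, ?_⟩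
      rcases hj i with h | h
      · right; rw [h]
      · left; rw [h]; simp
  · rintro ⟨_, ⟨i, rfl⟩, hv⟩
    rcases hj i with h | h <;> rcases hv with hv | hv
    · left; exact ⟨i, by rw [h, hv]⟩
    · right; exact ⟨i, by rw [h, hv]⟩
    · right; exact ⟨i, by rw [h, hv]; simp⟩
    · left; exact ⟨i, by rw [h, hv]⟩

/-- being in the same orbit -/
def Orb (a b : V8) : Prop := ∃ w ∈ WE8, w a = b

lemma Orb.trans {a b c : V8} (h : Orb a b) (h' : Orb b c) : Orb a c := by
  obtain ⟨w, hw, rfl⟩ := h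
  obtain ⟨w', hw', rfl⟩ := h'
  exact ⟨w' * w, mul_mem hw' hw, rfl⟩

lemma orb_step {a α : V8} (hα : α ∈ E8lat) (h2 : ip α α = 2) : Orb a (a - ip α a • α) :=
  ⟨refl8 α h2, refl8_mem α h2 hα, rfl⟩

lemma orb_ee (i j : Fin 8) (h : i ≠ j) : Orb (ee i) (ee j) ∧ Orb (-ee i) (ee j) := by
  constructor
  · have := orb_step (a := ee i) (ee_sub_mem i j)
      (by simp [ip_sub_left, ip_sub_right, ip_ee, h, h.symm]; norm_num)
    convert this using 1
    simp [ip_sub_left, ip_ee, h.symm]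
  · have := orb_step (a := -ee i) (ee_add_mem i j)
      (by simp [ip_add_left, ip_add_right, ip_ee, h, h.symm]; norm_num)
    convert this using 1
    simp [ip_add_left, ip_neg_right, ip_ee, h.symm]

lemma orb_pm (i : Fin 8) : Orb (ee i) (ee 0) ∧ Orb (-ee i) (ee 0) := by
  by_cases h : i = 0
  · subst h
    refine ⟨⟨1, one_mem _, rfl⟩, ?_⟩
    exact (orb_ee 0 1 (by decide)).2.trans (orb_ee 1 0 (by decide)).1
  · exact orb_ee i 0 h

/-- unit vectors in integer coordinates -/
def q4 (y : Fin 8 → ℤ) : V8 := fun i => (y i : ℂ) / 4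

lemma two_q4 (y : Fin 8 → ℤ) : (2 : ℂ) • q4 y = emb y := by
  funext i; simp only [q4, emb, Pi.smul_apply, smul_eq_mul]; ring

lemma ip_q4 (y : Fin 8 → ℤ) : ip (q4 y) (q4 y) = ((∑ i, y i * y i : ℤ) : ℂ) / 16 := by
  simp only [ip, q4]
  push_cast
  rw [Finset.sum_div]
  exact Finset.sum_congr rfl fun i _ => by ring

lemma q4_inj : Function.Injective q4 := fun y z h => by
  apply emb_inj; rw [← two_q4, h, two_q4]

lemma unit_iff (a : V8) : (ip a a = 1 ∧ (2 : ℂ) • a ∈ E8lat) ↔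
    ∃ y, a = q4 y ∧ LL y ∧ ∑ i, y i * y i = 16 := by
  constructor
  · rintro ⟨h1, h2⟩
    obtain ⟨y, hy, h⟩ := mem_lat h2
    have e : a = q4 y := by
      rw [← two_q4] at h
      exact smul_right_injective _ (two_ne_zero) h
    refine ⟨y, e, hy, ?_⟩
    rw [e, ip_q4] at h1
    have : ((∑ i, y i * y i : ℤ) : ℂ) = (16 : ℤ) := by push_cast at h1 ⊢; linear_combination 16 * h1
    exact_mod_cast this
  · rintro ⟨y, rfl, hy, hs⟩
    refine ⟨by rw [ip_q4, hs]; norm_num, ?_⟩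
    rw [two_q4]; exact emb_mem_of hy

lemma orb_odd (y : Fin 8 → ℤ) (hy : LL y) (hs : ∑ i, y i * y i = 16) (ho : ∀ i, Odd (y i)) :
    Orb (q4 y) (ee 0) := by
  have h3 : ∃ i, y i = 3 ∨ y i = -3 := by
    by_contra! hc
    have : ∀ i, y i * y i = 1 := fun i => by
      have hle : y i * y i ≤ 16 := by
        rw [← hs]
        exact Finset.single_le_sum (f := fun i => y i * y i)
          (fun i _ => mul_self_nonneg _) (Finset.mem_univ i)
      have hu : y i ≤ 4 := by nlinarith
      have hl : -4 ≤ y i := by nlinarith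
      obtain ⟨m, hm⟩ := ho i
      have := hc i
      have : y i = 1 ∨ y i = -1 := by omega
      rcases this with h | h <;> rw [h] <;> norm_num
    simp [this] at hs
  obtain ⟨i, hi⟩ := h3
  have h2 : (2 : ℂ) • q4 y ∈ E8lat ∧ ip (q4 y) (q4 y) = 1 := by
    have := (unit_iff (q4 y)).2 ⟨y, rfl, hy, hs⟩
    exact ⟨this.2, this.1⟩
  have hyi : q4 y i = (y i : ℂ) / 4 := rfl
  rcases hi with hi | hi
  · refine Orb.trans ?_ (orb_pm i).1
    have hα : (2 : ℂ) • q4 y - (2 : ℂ) • ee i ∈ E8lat := lat_sub h2.1 (two_ee_mem i)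
    have := orb_step (a := q4 y) hα (by
      simp only [ip_sub_left, ip_sub_right, ip_smul_left, ip_smul_right, ip_ee_left, ip_ee_right,
        h2.2, Pi.sub_apply, Pi.smul_apply, smul_eq_mul]
      simp only [hyi, hi, ee_apply, if_true]
      norm_num)
    convert this using 1
    simp only [ip_sub_left, ip_smul_left, ip_ee_left, h2.2, hyi, hi]
    push_cast
    module
  · refine Orb.trans ?_ (orb_pm i).2
    have hα : (2 : ℂ) • q4 y + (2 : ℂ) • ee i ∈ E8lat := lat_add h2.1 (two_ee_mem i)
    have := orb_step (a := q4 y) hα (by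
      simp only [ip_add_left, ip_add_right, ip_smul_left, ip_smul_right, ip_ee_left, ip_ee_right,
        h2.2, Pi.add_apply, Pi.smul_apply, smul_eq_mul]
      simp only [hyi, hi, ee_apply, if_true]
      norm_num)
    convert this using 1
    simp only [ip_add_left, ip_smul_left, ip_ee_left, h2.2, hyi, hi]
    push_cast
    module

lemma orb_unit {a : V8} (h1 : ip a a = 1) (h2 : (2 : ℂ) • a ∈ E8lat) : Orb a (ee 0) := by
  obtain ⟨y, rfl, hy, hs⟩ := (unit_iff a).1 ⟨h1, h2⟩
  obtain ⟨p, u, hu⟩ := hy.1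
  rcases Int.even_or_odd' p with ⟨c, hc | hc⟩
  swap
  · exact orb_odd y hy hs fun i => ⟨c + u i, by rw [hu, hc]; ring⟩
  -- even case
  obtain ⟨x, hx⟩ : ∃ x : Fin 8 → ℤ, ∀ i, y i = 2 * x i :=
    ⟨fun i => c + u i, fun i => by rw [hu, hc]; ring⟩
  have hxs : ∑ i, x i * x i = 4 := by
    have : ∑ i, y i * y i = 4 * ∑ i, x i * x i := by
      rw [Finset.mul_sum]
      exact Finset.sum_congr rfl fun i _ => by rw [hx]; ring
    omega
  by_cases hbig : ∃ i, x i = 2 ∨ x i = -2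
  · obtain ⟨i, hi⟩ := hbig
    have e := Finset.add_sum_erase Finset.univ (fun i => x i * x i) (Finset.mem_univ i)
    have hii : x i * x i = 4 := by rcases hi with h | h <;> rw [h] <;> norm_num
    simp only [hxs, hii] at e
    have hz : ∑ i ∈ Finset.univ.erase i, x i * x i = 0 := by omega
    rw [Finset.sum_eq_zero_iff_of_nonneg (fun i _ => mul_self_nonneg _)] at hz
    have h0 : ∀ j, j ≠ i → x j = 0 := fun j hj => mul_self_eq_zero.1 (hz j (by simp [hj]))
    rcases hi with hi | hi
    · have : q4 y = ee i := by
        funext j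
        rw [ee_apply]
        split_ifs with h
        · subst h; simp only [q4, hx, hi]; norm_num
        · simp [q4, hx, h0 j h]
      rw [this]; exact (orb_pm i).1
    · have : q4 y = -ee i := by
        funext j
        rw [Pi.neg_apply, ee_apply]
        split_ifs with h
        · subst h; simp only [q4, hx, hi]; norm_num
        · simp [q4, hx, h0 j h]
      rw [this]; exact (orb_pm i).2
  · push Not at hbig
    have hsm : ∀ i, x i = 0 ∨ x i = 1 ∨ x i = -1 := fun i => by
      have hle : x i * x i ≤ 4 := by
        rw [← hxs]
        exact Finset.single_le_sum (f := fun i => x i * x i)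
          (fun i _ => mul_self_nonneg _) (Finset.mem_univ i)
      have hu : x i ≤ 2 := by nlinarith
      have hl : -2 ≤ x i := by nlinarith
      have := hbig i
      omega
    obtain ⟨i, hi⟩ : ∃ i, x i ≠ 0 := by
      by_contra! hc
      simp [hc] at hxs
    obtain ⟨k, hk⟩ : ∃ k, x k = 0 := by
      by_contra! hc
      have : ∀ i, x i * x i = 1 := fun i => by
        rcases hsm i with h | h | h
        · exact absurd h (hc i)
        · rw [h]; norm_num
        · rw [h]; norm_num
      simp [this] at hxs
    have hik : k ≠ i := fun h => hi (h ▸ hk)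
    -- the signs
    let g : Fin 8 → ℤ := fun j => if j = i then - x j else if x j = 0 then 1 else x j
    have hg : ∀ j, g j = 1 ∨ g j = -1 := fun j => by
      simp only [g]
      split_ifs with h h'
      · subst h
        have := hsm j
        omega
      · simp
      · have := hsm j
        omega
    have hgk : g k = 1 := by simp [g, hik, hk]
    have hge : ∃ m, ∑ j, g j = 2 * m := by
      have : ∀ j, ∃ n, g j = 1 + 2 * n := fun j => by
        rcases hg j with h | h
        · exact ⟨0, by rw [h]; norm_num⟩
        · exact ⟨-1, by rw [h]; norm_num⟩
      choose n hn using this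
      refine ⟨4 + ∑ j, n j, ?_⟩
      simp only [hn, Finset.sum_add_distrib, ← Finset.mul_sum]
      simp; ring
    have hgx : ∑ j, g j * x j = 2 := by
      have : ∀ j, g j * x j = x j * x j - if j = i then 2 else 0 := fun j => by
        simp only [g]
        split_ifs with h h'
        · subst h
          rcases hsm j with h | h | h
          · exact absurd h hi
          · rw [h]; norm_num
          · rw [h]; norm_num
        · rw [h']; norm_num
        · ring
      simp only [this, Finset.sum_sub_distrib, hxs]
      simp
    obtain ⟨ε, hε, hεs, hεx⟩ : ∃ ε : Fin 8 → ℤ, (∀ j, ε j = 1 ∨ ε j = -1) ∧ 4 ∣ ∑ j, ε j ∧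
        ∑ j, ε j * x j = 2 := by
      obtain ⟨m, hm⟩ := hge
      rcases Int.even_or_odd' m with ⟨t, ht | ht⟩
      · exact ⟨g, hg, by rw [hm, ht]; exact ⟨t, by ring⟩, hgx⟩
      · refine ⟨fun j => g j - if j = k then 2 else 0, fun j => ?_, ?_, ?_⟩
        · dsimp only
          split_ifs with h
          · subst h; rw [hgk]; norm_num
          · simpa using hg j
        · rw [Finset.sum_sub_distrib, hm, ht]
          simp only [Finset.sum_ite_eq', Finset.mem_univ, if_true]
          exact ⟨t, by ring⟩
        · have : ∀ j, (g j - if j = k then 2 else 0) * x j = g j * x j := fun j => by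
            split_ifs with h
            · subst h; rw [hk]; ring
            · ring
          simp only [this, hgx]
    have hεodd : ∀ j, ∃ n, ε j = 1 + 2 * n := fun j => by
      rcases hε j with h | h
      · exact ⟨0, by rw [h]; norm_num⟩
      · exact ⟨-1, by rw [h]; norm_num⟩
    have hεε : ∑ j, ε j * ε j = 8 := by
      have : ∀ j, ε j * ε j = 1 := fun j => by
        rcases hε j with h | h <;> rw [h] <;> norm_num
      simp [this]
    choose n hn using hεodd
    have hα : emb ε ∈ E8lat := emb_mem_of ⟨⟨1, n, hn⟩, hεs⟩
    have hα2 : ip (emb ε) (emb ε) = 2 := by rw [ip_emb, hεε]; norm_num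
    have hip : ip (emb ε) (q4 y) = 1 / 2 := by
      have : ip (emb ε) (emb y) = 1 := by
        rw [ip_emb]
        have : ∑ j, ε j * y j = 4 := by
          have : ∑ j, ε j * y j = 2 * ∑ j, ε j * x j := by
            rw [Finset.mul_sum]
            exact Finset.sum_congr rfl fun i _ => by rw [hx]; ring
          omega
        rw [this]; norm_num
      rw [← two_q4 y, ip_smul_right] at this
      linear_combination this / 2
    have st := orb_step (a := q4 y) hα hα2
    rw [hip] at st
    refine st.trans ?_
    have e : q4 y - (1 / 2 : ℂ) • emb ε = q4 (fun j => y j - ε j) := by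
      funext j
      simp only [q4, emb, Pi.sub_apply, Pi.smul_apply, smul_eq_mul]
      push_cast; ring
    rw [e]
    refine orb_odd _ ⟨⟨1, fun j => x j - 1 - n j, fun j => ?_⟩, ?_⟩ ?_ fun j => ?_
    · simp only [hx, hn]; ring
    · rw [Finset.sum_sub_distrib]; exact dvd_sub hy.2 hεs
    · have : ∑ j, (y j - ε j) * (y j - ε j) =
          ∑ j, y j * y j - 4 * ∑ j, ε j * x j + ∑ j, ε j * ε j := by
        rw [Finset.mul_sum, ← Finset.sum_sub_distrib, ← Finset.sum_add_distrib]
        exact Finset.sum_congr rfl fun i _ => by rw [hx]; ring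
      rw [this, hs, hεx, hεε]; norm_num
    · exact ⟨x j - 1 - n j, by rw [hx, hn]; ring⟩

lemma frame_norm {l : ℕ} {A : Set V8} (hl : 1 ≤ l) (hA : IsClFrame l A) :
    ∃ w ∈ WE8, ∃ J : Finset (Fin 8), J.card = l ∧ (0 : Fin 8) ∈ J ∧ w '' A = stdF J := by
  obtain ⟨a, ha⟩ := frame_nonempty hl hA
  obtain ⟨h1, h2⟩ := frame_unit hA ha
  obtain ⟨w, hw, hwa⟩ := orb_unit h1 h2
  have h0 : ee 0 ∈ w '' A := ⟨a, ha, hwa⟩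
  obtain ⟨J, hJ, e⟩ := frame_std (frame_image hw hA) h0
  exact ⟨w, hw, J, hJ, by rw [e] at h0; exact ee_mem_stdF.1 h0, e⟩

lemma perm_mem (σ : Equiv.Perm (Fin 8)) : ∃ w ∈ WE8, ∀ j, w (ee j) = ee (σ j) := by
  induction σ using Equiv.Perm.swap_induction_on with
  | one => exact ⟨1, one_mem _, fun _ => rfl⟩
  | swap_mul f x y hxy ih =>
    obtain ⟨w, hw, h⟩ := ih
    have h2 : ip (ee x - ee y) (ee x - ee y) = 2 := by
      simp [ip_sub_left, ip_sub_right, ip_ee, hxy, hxy.symm]; norm_num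
    refine ⟨refl8 _ h2 * w, mul_mem (refl8_mem _ h2 (ee_sub_mem x y)) hw, fun j => ?_⟩
    change refl8 _ h2 (w (ee j)) = _
    rw [h, refl8_apply, ip_sub_left, ip_ee, ip_ee, Equiv.Perm.mul_apply, Equiv.swap_apply_def]
    by_cases h1 : f j = x
    · have : y ≠ f j := by rw [h1]; exact hxy.symm
      simp [h1, hxy.symm]
    · by_cases h3 : f j = y
      · simp [h3, hxy, hxy.symm]
      · simp [h1, h3, Ne.symm h1, Ne.symm h3]

lemma perm_std {J K : Finset (Fin 8)} (h : J.card = K.card) : ∃ w ∈ WE8, w '' stdF J = stdF K := by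
  have e : {x // x ∈ J} ≃ {x // x ∈ K} := Finset.equivOfCardEq h
  let σ : Equiv.Perm (Fin 8) := e.extendSubtype
  have hσ : ∀ j ∈ J, σ j ∈ K := fun j hj => e.extendSubtype_mem j hj
  have hσ' : J.image σ = K := by
    apply Finset.eq_of_subset_of_card_le
    · intro k hk
      obtain ⟨j, hj, rfl⟩ := Finset.mem_image.1 hk
      exact hσ j hj
    · rw [Finset.card_image_of_injective _ σ.injective, h]
  obtain ⟨w, hw, hwe⟩ := perm_mem σ
  refine ⟨w, hw, ?_⟩
  ext v
  constructor
  · rintro ⟨_, ⟨j, hj, rfl | rfl⟩, rfl⟩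
    · exact ⟨σ j, hσ j hj, Or.inl (hwe j)⟩
    · exact ⟨σ j, hσ j hj, Or.inr (by rw [map_neg, hwe])⟩
  · rintro ⟨k, hk, hv⟩
    rw [← hσ', Finset.mem_image] at hk
    obtain ⟨j, hj, rfl⟩ := hk
    rcases hv with rfl | rfl
    · exact ⟨ee j, ⟨j, hj, Or.inl rfl⟩, hwe j⟩
    · exact ⟨-ee j, ⟨j, hj, Or.inr rfl⟩, by rw [map_neg, hwe]⟩

lemma inv_image (w : V8 ≃ₗ[ℂ] V8) (A B : Set V8) : w '' A = B ↔ A = (w⁻¹ : V8 ≃ₗ[ℂ] V8) '' B := by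
  have h1 : ∀ x, w (w⁻¹ x) = x := fun x => w.apply_symm_apply x
  have h2 : ∀ x, w⁻¹ (w x) = x := fun x => w.symm_apply_apply x
  constructor
  · rintro rfl; simp [Set.image_image, h2]
  · rintro rfl; simp [Set.image_image, h1]

lemma mul_image (w w' : V8 ≃ₗ[ℂ] V8) (A : Set V8) :
    (w * w' : V8 ≃ₗ[ℂ] V8) '' A = w '' (w' '' A) := by
  rw [Set.image_image]; rfl

lemma part_trans {l : ℕ} (hl : 1 ≤ l) {A B : Set V8} (hA : IsClFrame l A) (hB : IsClFrame l B) :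
    ∃ w : V8 ≃ₗ[ℂ] V8, w ∈ WE8 ∧ w '' A = B := by
  obtain ⟨w, hw, J, hJ, -, e⟩ := frame_norm hl hA
  obtain ⟨w', hw', K, hK, -, e'⟩ := frame_norm hl hB
  obtain ⟨s, hs, es⟩ := perm_std (hJ.trans hK.symm)
  refine ⟨w'⁻¹ * (s * w), mul_mem (inv_mem hw') (mul_mem hs hw), ?_⟩
  rw [mul_image, mul_image, e, es, ← (inv_image _ _ _).1 e']

lemma frame8_std {B : Set V8} (hB : IsClFrame 8 B) {k : Fin 8} (hk : ee k ∈ B) :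
    B = stdF Finset.univ := by
  obtain ⟨J, hJ, rfl⟩ := frame_std hB hk
  congr 1
  exact Finset.eq_univ_of_card J (by simp [hJ])

lemma std8 : IsClFrame 8 (stdF Finset.univ) := stdF_frame (by simp)

lemma stdF_mono {J K : Finset (Fin 8)} (h : J ⊆ K) : stdF J ⊆ stdF K := by
  rintro v ⟨j, hj, hv⟩; exact ⟨j, h hj, hv⟩

/-- a unit lies in only one eight-frame -/
lemma unit_unique {a : V8} {B B' : Set V8} (hB : IsClFrame 8 B) (hB' : IsClFrame 8 B')
    (h : a ∈ B) (h' : a ∈ B') : B = B' := by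
  obtain ⟨h1, h2⟩ := frame_unit hB h
  obtain ⟨w, hw, hwa⟩ := orb_unit h1 h2
  have e := frame8_std (frame_image hw hB) (k := 0) ⟨a, h, hwa⟩
  have e' := frame8_std (frame_image hw hB') (k := 0) ⟨a, h', hwa⟩
  exact w.injective.image_injective (e.trans e'.symm)

lemma part_ext {l : ℕ} (hl : 1 ≤ l) {A : Set V8} (hA : IsClFrame l A) :
    ∃! B : Set V8, IsClFrame 8 B ∧ A ⊆ B := by
  obtain ⟨w, hw, J, hJ, -, e⟩ := frame_norm hl hA
  refine ⟨(w⁻¹ : V8 ≃ₗ[ℂ] V8) '' stdF Finset.univ, ⟨frame_image (inv_mem hw) std8, ?_⟩, ?_⟩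
  · rw [(inv_image _ _ _).1 e]
    exact Set.image_mono (stdF_mono (Finset.subset_univ _))
  · rintro B' ⟨hB', hs⟩
    obtain ⟨a, ha⟩ := frame_nonempty hl hA
    refine unit_unique hB' (frame_image (inv_mem hw) std8) (hs ha) ?_
    rw [(inv_image _ _ _).1 e] at ha
    exact Set.image_mono (stdF_mono (Finset.subset_univ _)) ha

/-- chosen group element moving the standard frame to the given one -/
lemma exists_choice : ∃ W : Set V8 → (V8 ≃ₗ[ℂ] V8), ∀ B, IsClFrame 8 B →
    W B ∈ WE8 ∧ W B '' stdF Finset.univ = B := by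
  have : ∀ B : Set V8, ∃ w : V8 ≃ₗ[ℂ] V8, IsClFrame 8 B →
    w ∈ WE8 ∧ w '' stdF Finset.univ = B := fun B => by
    by_cases h : IsClFrame 8 B
    · obtain ⟨w, hw⟩ := part_trans (by norm_num) std8 h
      exact ⟨w, fun _ => hw⟩
    · exact ⟨1, fun h' => absurd h' h⟩
  choose W hW using this
  exact ⟨W, hW⟩

lemma count_l {l : ℕ} (hl : 1 ≤ l) :
    {A : Set V8 | IsClFrame l A}.ncard = {B : Set V8 | IsClFrame 8 B}.ncard * Nat.choose 8 l := by
  obtain ⟨W, hW⟩ := exists_choice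
  have e : {A : Set V8 | IsClFrame l A} =
      (fun p : Set V8 × Finset (Fin 8) => W p.1 '' stdF p.2) ''
        ({B : Set V8 | IsClFrame 8 B} ×ˢ
          ((Finset.univ.powersetCard l : Finset (Finset (Fin 8))) : Set (Finset (Fin 8)))) := by
    ext A
    simp only [Set.mem_ofPred_eq, Set.mem_image, Set.mem_prod, Prod.exists, Finset.mem_coe,
      Finset.mem_powersetCard, Finset.subset_univ, true_and]
    constructor
    · intro hA
      obtain ⟨B, ⟨hB, hAB⟩, -⟩ := part_ext hl hA
      obtain ⟨hw, e⟩ := hW B hB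
      have hA' := frame_image (inv_mem hw) hA
      obtain ⟨a, ha⟩ := frame_nonempty hl hA'
      have hs : a ∈ stdF Finset.univ := by
        rw [(inv_image _ _ _).1 e]
        exact Set.image_mono hAB ha
      obtain ⟨k, -, hk⟩ := hs
      have hk' : ee k ∈ ((W B)⁻¹ : V8 ≃ₗ[ℂ] V8) '' A := by
        rcases hk with rfl | rfl
        · exact ha
        · simpa using frame_neg hA' ha
      obtain ⟨J, hJ, eJ⟩ := frame_std hA' hk'
      exact ⟨B, J, ⟨hB, hJ⟩, (inv_image _ _ _).2 eJ.symm⟩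
    · rintro ⟨B, J, ⟨hB, hJ⟩, rfl⟩
      exact frame_image (hW B hB).1 (stdF_frame hJ)
  rw [e, Set.InjOn.ncard_image, Set.ncard_prod, Set.ncard_coe_finset, Finset.card_powersetCard]
  · simp
  · rintro ⟨B, J⟩ ⟨hB, hJ⟩ ⟨B', J'⟩ ⟨hB', hJ'⟩ h
    simp only [Set.mem_ofPred_eq, Finset.mem_coe, Finset.mem_powersetCard] at hB hB' hJ hJ' h
    have sub : ∀ B J, IsClFrame 8 B → W B '' stdF J ⊆ B := fun B J hB => by
      conv_rhs => rw [← (hW B hB).2]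
      exact Set.image_mono (stdF_mono (Finset.subset_univ _))
    obtain ⟨a, ha⟩ := frame_nonempty hl (frame_image (hW B hB).1 (stdF_frame hJ.2))
    have hBB : B = B' := unit_unique hB hB' (sub B J hB ha) (sub B' J' hB' (h ▸ ha))
    subst hBB
    have := stdF_inj ((W B).injective.image_injective h)
    rw [this]

def UU : Set V8 := {a | ip a a = 1 ∧ (2 : ℂ) • a ∈ E8lat}

lemma pm_ee_inj {j j' : Fin 8} {s s' : Bool}
    (h : (bif s then ee j else -ee j) = (bif s' then ee j' else -ee j')) : j = j' ∧ s = s' := by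
  have hj : j = j' := by
    by_contra hne
    have := congrFun h j
    cases s <;> cases s' <;> simp [ee_apply, hne] at this
  subst hj
  refine ⟨rfl, ?_⟩
  have := congrFun h j
  cases s <;> cases s' <;> simp [ee_apply] at this ⊢
  · have h2 : (2 : ℂ) = 0 := by linear_combination -this
    norm_num at h2
  · have h2 : (2 : ℂ) = 0 := by linear_combination this
    norm_num at h2

lemma count_U : UU.ncard = {B : Set V8 | IsClFrame 8 B}.ncard * 16 := by
  obtain ⟨W, hW⟩ := exists_choice
  have e : UU = (fun p : Set V8 × (Fin 8 × Bool) =>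
        W p.1 (bif p.2.2 then ee p.2.1 else -ee p.2.1)) ''
        ({B : Set V8 | IsClFrame 8 B} ×ˢ
          ((Finset.univ : Finset (Fin 8 × Bool)) : Set (Fin 8 × Bool))) := by
    ext a
    simp only [Set.mem_image, Set.mem_prod, Prod.exists, Finset.mem_coe, Finset.mem_univ,
      and_true, Set.mem_ofPred_eq]
    constructor
    · rintro ⟨h1, h2⟩
      obtain ⟨w, hw, hwa⟩ := orb_unit h1 h2
      have hB := frame_image (inv_mem hw) std8
      have haB : a ∈ (w⁻¹ : V8 ≃ₗ[ℂ] V8) '' stdF Finset.univ :=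
        ⟨ee 0, ee_mem_stdF.2 (Finset.mem_univ _), by rw [← hwa]; exact w.symm_apply_apply a⟩
      rw [← (hW _ hB).2] at haB
      obtain ⟨_, ⟨j, -, rfl | rfl⟩, h⟩ := haB
      · exact ⟨_, j, true, hB, h⟩
      · exact ⟨_, j, false, hB, h⟩
    · rintro ⟨B, j, s, hB, rfl⟩
      refine frame_unit hB ?_
      have := (hW B hB).2
      rw [Set.ext_iff] at this
      refine (this _).1 (Set.mem_image_of_mem _ ?_)
      refine ⟨j, Finset.mem_univ _, ?_⟩
      cases s <;> simp
  rw [e, Set.InjOn.ncard_image, Set.ncard_prod, Set.ncard_coe_finset]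
  · simp
  · rintro ⟨B, j, s⟩ ⟨hB, -⟩ ⟨B', j', s'⟩ ⟨hB', -⟩ h
    simp only [Set.mem_ofPred_eq] at hB hB' h
    have sub : ∀ B j (s : Bool), IsClFrame 8 B → W B (bif s then ee j else -ee j) ∈ B :=
      fun B j s hB => by
        have := (hW B hB).2
        rw [Set.ext_iff] at this
        refine (this _).1 (Set.mem_image_of_mem _ ?_)
        refine ⟨j, Finset.mem_univ _, ?_⟩
        cases s <;> simp
    have hBB : B = B' := unit_unique hB hB' (sub B j s hB) (h ▸ sub B' j' s' hB')
    subst hBB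
    obtain ⟨rfl, rfl⟩ := pm_ee_inj ((W B).injective h)
    rfl

/-- vectors with entries in `E`, given norm and sum modulo 4 -/
def FF (E : Finset ℤ) (n : ℕ) (m r : ℤ) : Finset (Fin n → ℤ) :=
  (Fintype.piFinset fun _ => E).filter fun v => ∑ i, v i * v i = m ∧ 4 ∣ ∑ i, v i - r

/-- recursive count -/
def cnt (E : List ℤ) : ℕ → ℤ → ℤ → ℕ
  | 0, m, r => if m = 0 ∧ r % 4 = 0 then 1 else 0
  | n + 1, m, r => if m < 0 then 0 else (E.map fun e => cnt E n (m - e * e) (r - e)).sum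

lemma card_FF (E : List ℤ) (hE : E.Nodup) (n : ℕ) (m r : ℤ) :
    (FF E.toFinset n m r).card = cnt E n m r := by
  induction n generalizing m r with
  | zero =>
    simp only [cnt]
    split_ifs with h
    · have : FF E.toFinset 0 m r = {Fin.elim0} := by
        ext v
        simp only [FF, Finset.mem_filter, Fintype.mem_piFinset, Finset.mem_singleton]
        have hv : v = Fin.elim0 := Subsingleton.elim _ _
        simp [hv, h.1]
        omega
      rw [this]; rfl
    · rw [Finset.card_eq_zero]
      ext v
      simp only [FF, Finset.mem_filter, Finset.notMem_empty, iff_false, Finset.univ_eq_empty,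
        Finset.sum_empty]
      rintro ⟨-, h1, h2⟩
      exact h ⟨h1.symm, by omega⟩
  | succ n ih =>
    simp only [cnt]
    split_ifs with h
    · rw [Finset.card_eq_zero]
      ext v
      simp only [FF, Finset.mem_filter, Finset.notMem_empty, iff_false]
      rintro ⟨-, h', -⟩
      have : 0 ≤ ∑ i, v i * v i := Finset.sum_nonneg fun i _ => mul_self_nonneg _
      omega
    · have hm : ∀ v ∈ FF E.toFinset (n + 1) m r, v 0 ∈ E.toFinset := fun v hv => by
        simp only [FF, Finset.mem_filter, Fintype.mem_piFinset] at hv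
        exact hv.1 0
      rw [Finset.card_eq_sum_card_fiberwise hm, ← List.sum_toFinset _ hE]
      refine Finset.sum_congr rfl fun e he => ?_
      rw [← ih]
      symm
      refine Finset.card_bij (fun v _ => Fin.cons e v) ?_ ?_ ?_
      · intro v hv
        simp only [FF, Finset.mem_filter, Fintype.mem_piFinset] at hv ⊢
        refine ⟨⟨fun i => ?_, ?_, ?_⟩, by simp⟩
        · refine Fin.cases ?_ (fun i => ?_) i
          · simpa using he
          · simpa using hv.1 i
        · rw [Fin.sum_univ_succ]; simp only [Fin.cons_zero, Fin.cons_succ]; rw [hv.2.1]; ring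
        · rw [Fin.sum_univ_succ]; simp only [Fin.cons_zero, Fin.cons_succ]
          have := hv.2.2
          convert this using 1; ring
      · intro v _ v' _ h
        exact (Fin.cons_inj.1 h).2
      · intro v hv
        simp only [FF, Finset.mem_filter, Fintype.mem_piFinset] at hv
        obtain ⟨⟨h1, h2, h3⟩, h4⟩ := hv
        refine ⟨Fin.tail v, ?_, ?_⟩
        · rw [Fin.sum_univ_succ, h4] at h2 h3
          simp only [FF, Finset.mem_filter, Fintype.mem_piFinset]
          refine ⟨fun i => h1 _, ?_, ?_⟩
          · simp only [Fin.tail]; omega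
          · simp only [Fin.tail]; convert h3 using 1; ring
        · rw [← h4]; exact Fin.cons_self_tail v

lemma cnt_even : cnt [-4, -2, 0, 2, 4] 8 16 0 = 1136 := by decide +kernel
lemma cnt_odd : cnt [-3, -1, 1, 3] 8 16 0 = 1024 := by decide +kernel

lemma U_ncard : UU.ncard = 2160 := by
  have e : UU = q4 '' ((FF [-4, -2, 0, 2, 4].toFinset 8 16 0 ∪ FF [-3, -1, 1, 3].toFinset 8 16 0 :
      Finset (Fin 8 → ℤ)) : Set (Fin 8 → ℤ)) := by
    ext a
    have := unit_iff a
    simp only [UU, Set.mem_ofPred_eq, this, Set.mem_image, Finset.mem_coe, Finset.mem_union]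
    constructor
    · rintro ⟨y, rfl, ⟨⟨p, u, hu⟩, h4⟩, hs⟩
      refine ⟨y, ?_, rfl⟩
      have hb : ∀ i, -4 ≤ y i ∧ y i ≤ 4 := fun i => by
        have hle : y i * y i ≤ 16 := by
          rw [← hs]
          exact Finset.single_le_sum (f := fun i => y i * y i)
            (fun i _ => mul_self_nonneg _) (Finset.mem_univ i)
        exact ⟨by nlinarith, by nlinarith⟩
      simp only [FF, Finset.mem_filter, Fintype.mem_piFinset, sub_zero, hs, h4, and_true, true_and,
        List.mem_toFinset, List.mem_cons, List.not_mem_nil, or_false]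
      rcases Int.even_or_odd' p with ⟨c, hc | hc⟩
      · left; intro i
        have := hb i; have := hu i; omega
      · right; intro i
        have := hb i; have := hu i; omega
    · rintro ⟨y, hy, rfl⟩
      refine ⟨y, rfl, ?_⟩
      simp only [FF, Finset.mem_filter, Fintype.mem_piFinset, sub_zero,
        List.mem_toFinset, List.mem_cons, List.not_mem_nil, or_false] at hy
      rcases hy with ⟨h1, h2, h3⟩ | ⟨h1, h2, h3⟩
      · exact ⟨⟨⟨0, fun i => y i / 2, fun i => by have := h1 i; dsimp only; omega⟩, h3⟩, h2⟩
      · exact ⟨⟨⟨1, fun i => y i / 2, fun i => by have := h1 i; dsimp only; omega⟩, h3⟩, h2⟩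
  rw [e, Set.ncard_image_of_injective _ q4_inj, Set.ncard_coe_finset, Finset.card_union_of_disjoint,
    card_FF _ (by decide), card_FF _ (by decide), cnt_even, cnt_odd]
  rw [Finset.disjoint_left]
  intro y h1 h2
  simp only [FF, Finset.mem_filter, Fintype.mem_piFinset,
        List.mem_toFinset, List.mem_cons, List.not_mem_nil, or_false] at h1 h2
  have := h1.1 0
  have := h2.1 0
  omega

/-- Proposition 1.3: for fixed `l ∈ {1,…,8}`, (1) `W(E₈)` maps `C_l`-frames to `C_l`-frames
and acts transitively on them; (2) each `C_l`-frame is contained in a unique `C₈`-frame;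
(3) there are exactly `135·C(8,l)` `C_l`-frames. -/
theorem statement1 (l : ℕ) (hl1 : 1 ≤ l) (hl8 : l ≤ 8) :
    (∀ w : V8 ≃ₗ[ℂ] V8, w ∈ WE8 → ∀ A : Set V8, IsClFrame l A → IsClFrame l (⇑w '' A)) ∧
    (∀ A B : Set V8, IsClFrame l A → IsClFrame l B →
      ∃ w : V8 ≃ₗ[ℂ] V8, w ∈ WE8 ∧ ⇑w '' A = B) ∧
    (∀ A : Set V8, IsClFrame l A → ∃! B : Set V8, IsClFrame 8 B ∧ A ⊆ B) ∧
    {A : Set V8 | IsClFrame l A}.ncard = 135 * Nat.choose 8 l := by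
  have h8 : {B : Set V8 | IsClFrame 8 B}.ncard = 135 := by
    have h1 := count_U
    rw [U_ncard] at h1
    omega
  exact ⟨fun w hw A hA => frame_image hw hA, fun A B hA hB => part_trans hl1 hA hB,
    fun A hA => part_ext hl1 hA, by rw [count_l hl1, h8]⟩
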